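/- Let k ≥ 3 and n ≥ 3k·binomial(2k, k). Let F be a (3, 2k)-conditionally intersecting family of k-element subsets of [n] such that every member F of F contains a (k−1)-element subset that is contained in no other member of F, let A, B ∈ F be disjoint, and set U = [n] − (A ∪ B). Then for every integer ℓ with 1 ≤ ℓ and 2ℓ ≤ k+1, one has 2·Σ_{i=0}^{ℓ} |F_i| ≤ Σ_{i=1}^{ℓ} (2·w_i − n_i), where F_i = {F ∈ F : |F ∩ (A ∪ B)| = i}, w_i = binomial(k−1, i−1)·binomial(n−2k, k−i), and n_i is the number of non-perfect (k−i)-element subsets of U. -/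

import Mathlib

/-- A family `F` of finsets is `(d, s)`-conditionally intersecting if there do not exist
`d` distinct members of `F` whose union has size at most `s` and whose intersection is empty. -/
def CondIntersecting {n : ℕ} (d s : ℕ) (F : Finset (Finset (Fin n))) : Prop :=
  ¬ ∃ D ⊆ F, D.card = d ∧ (D.sup id).card ≤ s ∧ D.inf id = ∅

/-- `F(C) = {S - C : S ∈ F, S ∩ U = C}`. -/
def FamC {n : ℕ} (F : Finset (Finset (Fin n))) (U C : Finset (Fin n)) :
    Finset (Finset (Fin n)) :=
  (F.filter (fun S => S ∩ U = C)).image (fun S => S \ C)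

/-- The family of all `m`-element subsets of `A` that contain `v`. -/
def starFam {n : ℕ} (m : ℕ) (A : Finset (Fin n)) (v : Fin n) :
    Finset (Finset (Fin n)) :=
  (A.powersetCard m).filter (fun E => v ∈ E)

/-- A set `C ⊆ U` of size `k - 1` is perfect if it is contained in some member of `F`;
a set `C ⊆ U` of size at most `k - 2` is perfect if `F(C)` is the full star on `A` with
some core `v ∈ A`, or the full star on `B` with some core `v ∈ B`. -/
def PerfectSet {n : ℕ} (k : ℕ) (F : Finset (Finset (Fin n))) (A B U : Finset (Fin n))
    (C : Finset (Fin n)) : Prop :=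
  if C.card = k - 1 then ∃ S ∈ F, C ⊆ S
  else (∃ v ∈ A, FamC F U C = starFam (k - C.card) A v) ∨
       (∃ v ∈ B, FamC F U C = starFam (k - C.card) B v)

open Classical in
/-- `n_i`: the number of non-perfect `(k-i)`-element subsets of `U`. -/
noncomputable def nonPerfectCount {n : ℕ} (k i : ℕ) (F : Finset (Finset (Fin n)))
    (A B U : Finset (Fin n)) : ℕ :=
  ((U.powersetCard (k - i)).filter (fun C => ¬ PerfectSet k F A B U C)).card

open Classical in
/-- `b_i`: the number of `(k-i)`-element subsets of `U` that are non-perfect and are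
contained in no perfect `(k-i+1)`-element subset of `U`. -/
noncomputable def badCount {n : ℕ} (k i : ℕ) (F : Finset (Finset (Fin n)))
    (A B U : Finset (Fin n)) : ℕ :=
  ((U.powersetCard (k - i)).filter (fun C => ¬ PerfectSet k F A B U C ∧
    ∀ D ∈ U.powersetCard (k - i + 1), C ⊆ D → ¬ PerfectSet k F A B U D)).card

/-!
Call the members of `F` with trace `C` on `U` the fibre of `C`; the fibre has the size of `F(C)`,
and `F_i` is the union of the fibres over the `(k - i)`-subsets of `U`. With `m = i - 1`, a perfect
`C` of size `k - i` has a fibre of size `(k - 1).choose m` exactly. If `C` is not perfect but lies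
in a perfect `D` one size larger, then every `S` in the fibre of `C` can be compared with the
members in the star `F(D)`, with `A` or `B` as the third set of a conditionally intersecting
triple: `S` must contain the core of that star and live on the same side, so `F(C)` is a proper
subfamily of a full star and the fibre has at most `(k - 1).choose m - 1` members. (When `m = 1`,
the perfect `D` may also extend only by a point of `U`; then the fibre has at most one member.)

The fibre over one of the `b_i` remaining sets `C` is bounded crudely by `(2 * k).choose i`. All
one-point extensions of such a `C` inside `U` are non-perfect, so double counting inclusions gives
`b_i * (n - 2 * k - (k - i)) ≤ n_{i-1} * (k - i + 1)`. As `n` is large, `2 * (2 * k).choose i * b_i`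
is at most `n_{i-1}`, that is, `2 * |F_i| ≤ 2 * w_i - 2 * n_i + n_{i-1}`, and this telescopes. The
sum starts with `|F_0| + |F_1| ≤ w_1 - n_1`: the members counted here have distinct own
`(k - 1)`-subsets in `U`, which are perfect.
-/

open Finset

section SetFamilies

variable {α : Type*} [DecidableEq α]

/-- The family `F_i` of the members of `F` that meet `I` in exactly `i` points. -/
def level (F : Finset (Finset α)) (I : Finset α) (i : ℕ) : Finset (Finset α) :=
  {S ∈ F | #(S ∩ I) = i}

lemma mem_level {F : Finset (Finset α)} {I S : Finset α} {i : ℕ} :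
    S ∈ level F I i ↔ S ∈ F ∧ #(S ∩ I) = i :=
  mem_filter

lemma card_inter_union_of_disjoint {A B : Finset α} (hAB : Disjoint A B) (S : Finset α) :
    #(S ∩ (A ∪ B)) = #(S ∩ A) + #(S ∩ B) := by
  rw [inter_union_distrib_left,
    card_union_of_disjoint (hAB.mono inter_subset_right inter_subset_right)]

lemma sdiff_subset_of_sdiff_union_subset {A B S T : Finset α} (hsdiff : S \ (A ∪ B) ⊆ T)
    (hinter : S ∩ A ⊆ T) : S \ B ⊆ T := by
  grind

lemma subset_of_card_le_one_of_inter_nonempty {s t : Finset α} (hs : #s ≤ 1)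
    (hst : (s ∩ t).Nonempty) : s ⊆ t := by
  obtain ⟨x, hx⟩ := hst
  obtain ⟨hxs, hxt⟩ := mem_inter.1 hx
  exact fun y hy ↦ card_le_one.1 hs x hxs y hy ▸ hxt

lemma card_mul_le_card_mul_of_insert_mem {𝒜 ℬ : Finset (Finset α)} {U : Finset α} {r : ℕ}
    (h𝒜 : 𝒜 ⊆ U.powersetCard r) (hℬ : ∀ D ∈ ℬ, #D = r + 1)
    (hins : ∀ C ∈ 𝒜, ∀ x ∈ U \ C, insert x C ∈ ℬ) :
    #𝒜 * (#U - r) ≤ #ℬ * (r + 1) := by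
  refine card_mul_le_card_mul (· ⊆ ·) (fun C hC ↦ ?_) fun D hD ↦ ?_
  · obtain ⟨hCU, hCr⟩ := mem_powersetCard.1 (h𝒜 hC)
    rw [← hCr, ← card_sdiff_of_subset hCU]
    refine card_le_card_of_injOn (insert · C) (fun x hx ↦ ?_) fun x hx y _ hxy ↦ ?_
    · exact mem_coe.2 (mem_bipartiteAbove _ |>.2 ⟨hins C hC x hx, subset_insert x C⟩)
    · exact (insert_inj (mem_sdiff.1 hx).2).1 hxy
  · rw [← Nat.choose_succ_self_right, ← hℬ D hD, ← card_powersetCard]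
    refine card_le_card fun C hC ↦ ?_
    obtain ⟨hC, hCD⟩ := (mem_bipartiteBelow _).1 hC
    exact mem_powersetCard.2 ⟨hCD, (mem_powersetCard.1 (h𝒜 hC)).2⟩

end SetFamilies

section Stars

variable {n m : ℕ} {F : Finset (Finset (Fin n))} {A C E I : Finset (Fin n)} {v : Fin n}

lemma mem_starFam : E ∈ starFam m A v ↔ E ⊆ A ∧ #E = m ∧ v ∈ E := by
  simp only [starFam, mem_filter, mem_powersetCard, and_assoc]

lemma starFam_one (hv : v ∈ A) : starFam 1 A v = {{v}} := by
  ext E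
  rw [mem_starFam, mem_singleton]
  refine ⟨fun ⟨_, hE, hvE⟩ ↦ ?_, by rintro rfl; simpa⟩
  exact (eq_of_subset_of_card_le (singleton_subset_iff.2 hvE) (by simp [hE])).symm

lemma card_starFam (hm : 1 ≤ m) (hv : v ∈ A) :
    #(starFam m A v) = (#A - 1).choose (m - 1) := by
  simpa only [starFam, singleton_subset_iff, card_singleton] using
    card_filter_powersetCard_subset {v} A m (singleton_subset_iff.2 hv) (by simpa)

lemma mem_FamC_univ_sdiff :
    E ∈ FamC F (univ \ I) C ↔ ∃ S ∈ F, S \ I = C ∧ S ∩ I = E := by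
  have hinter (S : Finset (Fin n)) : S ∩ (univ \ I) = S \ I := by
    rw [← compl_eq_univ_sdiff, sdiff_eq_inter_compl]
  simp only [FamC, mem_image, mem_filter, hinter, and_assoc]
  refine exists_congr fun S ↦ and_congr_right fun _ ↦ and_congr_right ?_
  rintro rfl
  rw [sdiff_sdiff_self_left]

lemma FamC_subset_powersetCard {i : ℕ} (hunif : ∀ S ∈ F, #S = #C + i) :
    FamC F (univ \ I) C ⊆ I.powersetCard i := by
  intro E hE
  obtain ⟨S, hS, rfl, rfl⟩ := mem_FamC_univ_sdiff.1 hE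
  have hcard := card_inter_add_card_sdiff S I
  have hSk := hunif S hS
  exact mem_powersetCard.2 ⟨inter_subset_right, by omega⟩

lemma card_FamC_univ_sdiff : #(FamC F (univ \ I) C) = #{S ∈ F | S \ I = C} := by
  have himage : FamC F (univ \ I) C = {S ∈ F | S \ I = C}.image (· ∩ I) := by
    ext E
    simp only [mem_FamC_univ_sdiff, mem_image, mem_filter, and_assoc]
  rw [himage]
  refine card_image_of_injOn fun S hS T hT hST ↦ ?_
  have hsdiff : S \ I = T \ I := (mem_filter.1 hS).2.trans (mem_filter.1 hT).2.symm
  have hinter : S ∩ I = T ∩ I := hST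
  rw [← sdiff_union_inter S I, hsdiff, hinter, sdiff_union_inter]

lemma card_level_eq_sum_card_FamC {k i : ℕ} (hunif : ∀ S ∈ F, #S = k) (hik : i ≤ k) :
    #(level F I i) = ∑ C ∈ (univ \ I).powersetCard (k - i), #(FamC F (univ \ I) C) := by
  have hmaps : Set.MapsTo (· \ I) (level F I i : Set (Finset (Fin n)))
      ((univ \ I).powersetCard (k - i) : Set (Finset (Fin n))) := by
    intro S hS
    obtain ⟨hS, hSi⟩ := mem_level.1 hS
    have hSI : #(S \ I) = k - i := by
      have hcard := card_inter_add_card_sdiff S I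
      have hSk := hunif S hS
      omega
    exact mem_coe.2 (mem_powersetCard.2 ⟨sdiff_subset_sdiff (subset_univ S) le_rfl, hSI⟩)
  rw [card_eq_sum_card_fiberwise hmaps]
  refine sum_congr rfl fun C hC ↦ ?_
  rw [card_FamC_univ_sdiff]
  congr 1
  ext S
  simp only [mem_filter, mem_level]
  refine ⟨fun ⟨⟨hS, _⟩, hSC⟩ ↦ ⟨hS, hSC⟩, fun ⟨hS, hSC⟩ ↦ ⟨⟨hS, ?_⟩, hSC⟩⟩
  have hcard := card_inter_add_card_sdiff S I
  rw [hSC, (mem_powersetCard.1 hC).2, hunif S hS] at hcard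
  omega

end Stars

namespace CondIntersecting

variable {n k s : ℕ} {F : Finset (Finset (Fin n))} {A B S T : Finset (Fin n)}

lemma inter_inter_nonempty (hci : CondIntersecting 3 s F) (hS : S ∈ F) (hT : T ∈ F) (hA : A ∈ F)
    (hST : S ≠ T) (hSA : S ≠ A) (hTA : T ≠ A) (hs : #(S ∪ T ∪ A) ≤ s) :
    (S ∩ T ∩ A).Nonempty := by
  by_contra hempty
  rw [not_nonempty_iff_eq_empty, inter_assoc] at hempty
  rw [union_assoc] at hs
  refine hci ⟨{S, T, A}, ?_, card_eq_three.2 ⟨S, T, A, hST, hSA, hTA, rfl⟩, ?_, ?_⟩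
  · simp only [insert_subset_iff, singleton_subset_iff, hS, hT, hA, and_self]
  · simpa using hs
  · simpa using hempty

lemma inter_inter_nonempty_of_sdiff_subset (hci : CondIntersecting 3 (2 * k) F)
    (hunif : ∀ S ∈ F, #S = k) (hS : S ∈ F) (hT : T ∈ F) (hA : A ∈ F)
    (hST : S ≠ T) (hSA : S ≠ A) (hTA : T ≠ A) (hsub : S \ A ⊆ T) : (S ∩ T ∩ A).Nonempty := by
  refine hci.inter_inter_nonempty hS hT hA hST hSA hTA ?_
  calc #(S ∪ T ∪ A) ≤ #(T ∪ A) := card_le_card (by grind)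
    _ ≤ #T + #A := card_union_le T A
    _ = 2 * k := by rw [hunif T hT, hunif A hA, two_mul]

lemma not_sdiff_subset_of_disjoint (hci : CondIntersecting 3 (2 * k) F)
    (hunif : ∀ S ∈ F, #S = k) (hS : S ∈ F) (hT : T ∈ F) (hA : A ∈ F)
    (hST : S ≠ T) (hSA : S ≠ A) (hTA : Disjoint T A) : ¬ S \ A ⊆ T := by
  intro hsub
  have hne : T ≠ A := by
    rintro rfl
    rw [disjoint_self_iff_empty] at hTA
    grind
  have hinter := hci.inter_inter_nonempty_of_sdiff_subset hunif hS hT hA hST hSA hne hsub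
  rw [inter_assoc, disjoint_iff_inter_eq_empty.1 hTA, inter_empty] at hinter
  exact not_nonempty_empty hinter

lemma eq_of_sdiff_subset_of_card_inter_eq_one (hk : 2 ≤ k) (hci : CondIntersecting 3 (2 * k) F)
    (hunif : ∀ S ∈ F, #S = k) (hS : S ∈ F) (hT : T ∈ F) (hA : A ∈ F)
    (hSA : #(S ∩ A) = 1) (hsub : S \ A ⊆ T) : S = T := by
  by_contra hST
  have hSne : S ≠ A := by
    rintro rfl
    rw [inter_self, hunif S hS] at hSA
    omega
  have hTne : T ≠ A := by
    rintro rfl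
    have hSsub : S ⊆ T := by grind
    exact hST (eq_of_subset_of_card_le hSsub (by rw [hunif S hS, hunif T hT]))
  have hinter := hci.inter_inter_nonempty_of_sdiff_subset hunif hS hT hA hST hSne hTne hsub
  have hSsub : S ⊆ T := by
    rw [inter_right_comm] at hinter
    rw [← sdiff_union_inter S A]
    exact union_subset hsub (subset_of_card_le_one_of_inter_nonempty hSA.le hinter)
  exact hST (eq_of_subset_of_card_le hSsub (by rw [hunif S hS, hunif T hT]))

lemma eq_of_card_inter_eq_one (hk : 2 ≤ k) (hci : CondIntersecting 3 (2 * k) F)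
    (hunif : ∀ S ∈ F, #S = k) (hS : S ∈ F) (hT : T ∈ F) (hA : A ∈ F) (hB : B ∈ F)
    (hAB : Disjoint A B) (hSA : #(S ∩ A) = 1) (hSB : #(S ∩ B) = 1) (hTA : #(T ∩ A) = 1)
    (hTB : #(T ∩ B) = 1) (hsdiff : S \ (A ∪ B) = T \ (A ∪ B)) : S = T := by
  have ne_of_card {R : Finset (Fin n)} (hRA : #(R ∩ A) = 1) : R ≠ A := by
    rintro rfl
    rw [inter_self, hunif R hA] at hRA
    omega
  have hunion : #(S ∪ T ∪ A) ≤ 2 * k := by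
    have hcard := card_inter_add_card_sdiff S (A ∪ B)
    rw [card_inter_union_of_disjoint hAB, hSA, hSB, hunif S hS] at hcard
    calc #(S ∪ T ∪ A) ≤ #(S \ (A ∪ B) ∪ (S ∩ B) ∪ (T ∩ B) ∪ A) := card_le_card (by grind)
      _ ≤ #(S \ (A ∪ B)) + #(S ∩ B) + #(T ∩ B) + #A := by grw [card_union_le, card_union_le,
        card_union_le]
      _ = 2 * k := by
        rw [hSB, hTB, hunif A hA]
        omega
  by_contra hST
  have hinter := hci.inter_inter_nonempty hS hT hA hST (ne_of_card hSA) (ne_of_card hTA) hunion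
  rw [inter_right_comm] at hinter
  have hSAT : S ∩ A ⊆ T := subset_of_card_le_one_of_inter_nonempty hSA.le hinter
  exact hST (hci.eq_of_sdiff_subset_of_card_inter_eq_one hk hunif hS hT hB hSB
    (sdiff_subset_of_sdiff_union_subset (hsdiff ▸ sdiff_subset) hSAT))

variable {C D E : Finset (Fin n)} {v : Fin n} {m : ℕ}

lemma not_inter_subset_of_mem_starFam (hci : CondIntersecting 3 (2 * k) F)
    (hunif : ∀ S ∈ F, #S = k) (hB : B ∈ F) (hAB : Disjoint A B) (hS : S ∈ F)
    (hSne : (S \ (A ∪ B)).Nonempty) (hSD : S \ (A ∪ B) ⊂ D)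
    (hstar : starFam m A v ⊆ FamC F (univ \ (A ∪ B)) D) (hE : E ∈ starFam m A v) :
    ¬ S ∩ A ⊆ E := by
  intro hSE
  obtain ⟨T, hT, hTD, hTE⟩ := mem_FamC_univ_sdiff.1 (hstar hE)
  have hEA : E ⊆ A := (mem_starFam.1 hE).1
  have hST : S ≠ T := by
    rintro rfl
    exact hSD.ne hTD
  have hSB : S ≠ B := by
    rintro rfl
    grind
  have hTB : Disjoint T B := by
    rw [disjoint_left] at hAB ⊢
    grind
  refine hci.not_sdiff_subset_of_disjoint hunif hS hT hB hST hSB hTB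
    (sdiff_subset_of_sdiff_union_subset (A := A) ?_ ?_)
  · exact hSD.subset.trans (hTD ▸ sdiff_subset)
  · exact hSE.trans (hTE ▸ inter_subset_left)

lemma core_mem_of_starFam_subset_FamC (hci : CondIntersecting 3 (2 * k) F)
    (hunif : ∀ S ∈ F, #S = k) (hA : A ∈ F) (hB : B ∈ F) (hAB : Disjoint A B) (hv : v ∈ A)
    (hm : 1 ≤ m) (hmk : 2 * m + 1 ≤ k) (hDm : #D + m = k)
    (hstar : starFam m A v ⊆ FamC F (univ \ (A ∪ B)) D) (hS : S ∈ F)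
    (hSD : S \ (A ∪ B) ⊂ D) (hSm : #(S \ (A ∪ B)) + (m + 1) = k) : v ∈ S := by
  by_contra hvS
  have hSne : (S \ (A ∪ B)).Nonempty := card_pos.1 (by omega)
  have hcard := card_inter_add_card_sdiff S (A ∪ B)
  rw [card_inter_union_of_disjoint hAB, hunif S hS] at hcard
  have hcardA := card_sdiff_add_card_inter A S
  rw [inter_comm, hunif A hA] at hcardA
  obtain ⟨E, hvE, hEAS, hEm⟩ : ∃ E, {v} ⊆ E ∧ E ⊆ A \ S ∧ #E = m :=
    exists_subsuperset_card_eq (by simp [hv, hvS]) (by simpa) (by omega)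
  have hEA : E ⊆ A := hEAS.trans sdiff_subset
  have hE : E ∈ starFam m A v := mem_starFam.2 ⟨hEA, hEm, singleton_subset_iff.1 hvE⟩
  have hnotsub := hci.not_inter_subset_of_mem_starFam hunif hB hAB hS hSne hSD hstar hE
  have hSA : 0 < #(S ∩ A) := card_pos.2 (by grind)
  obtain ⟨T, hT, hTD, hTE⟩ := mem_FamC_univ_sdiff.1 (hstar hE)
  have hunion : #(S ∪ T ∪ A) ≤ 2 * k :=
    calc #(S ∪ T ∪ A) ≤ #(D ∪ (S ∩ B) ∪ A) := card_le_card (by have := hSD.subset; grind)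
      _ ≤ #D + #(S ∩ B) + #A := by grw [card_union_le, card_union_le]
      _ ≤ 2 * k := by
        rw [hunif A hA]
        omega
  obtain ⟨x, hx⟩ := hci.inter_inter_nonempty hS hT hA (by rintro rfl; exact hSD.ne hTD)
    (by rintro rfl; exact hvS hv) (by rintro rfl; grind) hunion
  grind

lemma FamC_subset_starFam (hci : CondIntersecting 3 (2 * k) F)
    (hunif : ∀ S ∈ F, #S = k) (hA : A ∈ F) (hB : B ∈ F) (hAB : Disjoint A B) (hv : v ∈ A)
    (hm : 1 ≤ m) (hmk : 2 * m + 1 ≤ k) (hCD : C ⊂ D) (hCm : #C + (m + 1) = k) (hDm : #D + m = k)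
    (hstar : starFam m A v ⊆ FamC F (univ \ (A ∪ B)) D) :
    FamC F (univ \ (A ∪ B)) C ⊆ starFam (m + 1) A v := by
  intro E hE
  obtain ⟨S, hS, rfl, rfl⟩ := mem_FamC_univ_sdiff.1 hE
  have hvS := hci.core_mem_of_starFam_subset_FamC hunif hA hB hAB hv hm hmk hDm hstar hS hCD hCm
  have hcard := card_inter_add_card_sdiff S (A ∪ B)
  have hSI : #(S ∩ (A ∪ B)) = m + 1 := by
    rw [hunif S hS] at hcard
    omega
  have hSA : m < #(S ∩ A) := by
    by_contra! hle
    obtain ⟨E, hSE, hEA, hEm⟩ : ∃ E, S ∩ A ⊆ E ∧ E ⊆ A ∧ #E = m :=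
      exists_subsuperset_card_eq inter_subset_right hle (by rw [hunif A hA]; omega)
    exact hci.not_inter_subset_of_mem_starFam hunif hB hAB hS (card_pos.1 (by omega)) hCD hstar
      (mem_starFam.2 ⟨hEA, hEm, hSE (mem_inter.2 ⟨hvS, hv⟩)⟩) hSE
  have hSIA : S ∩ A = S ∩ (A ∪ B) :=
    eq_of_subset_of_card_le (inter_subset_inter_left subset_union_left) (by omega)
  exact mem_starFam.2 ⟨hSIA ▸ inter_subset_right, hSI, hSIA ▸ mem_inter.2 ⟨hvS, hv⟩⟩

lemma card_FamC_le_one_of_disjoint (hci : CondIntersecting 3 (2 * k) F)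
    (hunif : ∀ S ∈ F, #S = k) (hA : A ∈ F) (hB : B ∈ F) (hAB : Disjoint A B) (hT : T ∈ F)
    (hTI : Disjoint T (A ∪ B)) (hCT : C ⊆ T) (hC : #C + 2 = k) (hk : 3 ≤ k) :
    #(FamC F (univ \ (A ∪ B)) C) ≤ 1 := by
  obtain ⟨hTA, hTB⟩ := disjoint_union_right.1 hTI
  obtain ⟨c, hc⟩ : C.Nonempty := card_pos.1 (by omega)
  have hmixed : ∀ S ∈ F, S \ (A ∪ B) = C → #(S ∩ A) = 1 ∧ #(S ∩ B) = 1 := by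
    rintro S hS rfl
    have hcard := card_inter_add_card_sdiff S (A ∪ B)
    rw [card_inter_union_of_disjoint hAB, hunif S hS] at hcard
    have hST : S ≠ T := by
      rintro rfl
      rw [disjoint_iff_inter_eq_empty.1 hTA, disjoint_iff_inter_eq_empty.1 hTB] at hcard
      simp only [card_empty] at hcard
      omega
    have hSA : #(S ∩ A) ≠ 0 := fun hempty ↦
      hci.not_sdiff_subset_of_disjoint hunif hS hT hB hST (by rintro rfl; grind) hTB
        (sdiff_subset_of_sdiff_union_subset hCT (card_eq_zero.1 hempty ▸ empty_subset T))
    have hSB : #(S ∩ B) ≠ 0 := fun hempty ↦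
      hci.not_sdiff_subset_of_disjoint hunif hS hT hA hST (by rintro rfl; grind) hTA
        (sdiff_subset_of_sdiff_union_subset (union_comm A B ▸ hCT)
          (card_eq_zero.1 hempty ▸ empty_subset T))
    omega
  rw [card_FamC_univ_sdiff, card_le_one]
  intro S hS S' hS'
  obtain ⟨hS, hSC⟩ := mem_filter.1 hS
  obtain ⟨hS', hSC'⟩ := mem_filter.1 hS'
  obtain ⟨hSA, hSB⟩ := hmixed S hS hSC
  obtain ⟨hSA', hSB'⟩ := hmixed S' hS' hSC'
  exact hci.eq_of_card_inter_eq_one (by omega) hunif hS hS' hA hB hAB hSA hSB hSA' hSB'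
    (hSC.trans hSC'.symm)

lemma exists_own_subset_of_card_inter_le_one (hk : 2 ≤ k) (hci : CondIntersecting 3 (2 * k) F)
    (hunif : ∀ S ∈ F, #S = k)
    (huniq : ∀ S ∈ F, ∃ G ⊆ S, #G = k - 1 ∧ ∀ T ∈ F, G ⊆ T → T = S)
    (hA : A ∈ F) (hB : B ∈ F) (hAB : Disjoint A B) (hS : S ∈ F) (hSI : #(S ∩ (A ∪ B)) ≤ 1) :
    ∃ G ∈ (univ \ (A ∪ B)).powersetCard (k - 1), G ⊆ S ∧ ∀ T ∈ F, G ⊆ T → T = S := by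
  have hcard := card_inter_add_card_sdiff S (A ∪ B)
  rw [hunif S hS] at hcard
  rcases Nat.le_one_iff_eq_zero_or_eq_one.1 hSI with hzero | hone
  · obtain ⟨G, hGS, hGk, hG⟩ := huniq S hS
    have hSU : Disjoint S (A ∪ B) := disjoint_iff_inter_eq_empty.2 (card_eq_zero.1 hzero)
    exact ⟨G, mem_powersetCard.2
      ⟨subset_sdiff.2 ⟨subset_univ G, hSU.mono_left hGS⟩, hGk⟩, hGS, hG⟩
  · refine ⟨S \ (A ∪ B), mem_powersetCard.2
      ⟨sdiff_subset_sdiff (subset_univ S) le_rfl, by omega⟩, sdiff_subset, fun T hT hsub ↦ ?_⟩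
    rw [card_inter_union_of_disjoint hAB] at hone
    rcases Nat.add_eq_one_iff.1 hone with ⟨hSA, hSB⟩ | ⟨hSA, hSB⟩
    · refine (hci.eq_of_sdiff_subset_of_card_inter_eq_one hk hunif hS hT hB hSB ?_).symm
      exact sdiff_subset_of_sdiff_union_subset hsub (card_eq_zero.1 hSA ▸ empty_subset T)
    · refine (hci.eq_of_sdiff_subset_of_card_inter_eq_one hk hunif hS hT hA hSA ?_).symm
      exact sdiff_subset_of_sdiff_union_subset (union_comm A B ▸ hsub)
        (card_eq_zero.1 hSB ▸ empty_subset T)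

end CondIntersecting

section Perfect

variable {n k m : ℕ} {F : Finset (Finset (Fin n))} {A B C D : Finset (Fin n)}

lemma PerfectSet.starFam_subset_FamC_or (hD : PerfectSet k F A B (univ \ (A ∪ B)) D)
    (hunif : ∀ S ∈ F, #S = k) (hm : 1 ≤ m) (hDm : #D + m = k) (hDI : Disjoint D (A ∪ B)) :
    (∃ v ∈ A, starFam m A v ⊆ FamC F (univ \ (A ∪ B)) D) ∨
      (∃ v ∈ B, starFam m B v ⊆ FamC F (univ \ (A ∪ B)) D) ∨
      m = 1 ∧ ∃ T ∈ F, Disjoint T (A ∪ B) ∧ D ⊆ T := by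
  unfold PerfectSet at hD
  split_ifs at hD with hcard
  · obtain rfl : m = 1 := by omega
    obtain ⟨T, hT, hDT⟩ := hD
    obtain ⟨x, _, rfl⟩ := exists_eq_insert_iff.2 ⟨hDT, hDm.trans (hunif T hT).symm⟩
    by_cases hxI : x ∈ A ∪ B
    · have hmem : {x} ∈ FamC F (univ \ (A ∪ B)) D :=
        mem_FamC_univ_sdiff.2 ⟨insert x D, hT, by
          rw [insert_sdiff_of_mem D hxI, sdiff_eq_self_of_disjoint hDI], by
          rw [insert_inter_of_mem hxI, disjoint_iff_inter_eq_empty.1 hDI, insert_empty_eq]⟩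
      rw [← singleton_subset_iff] at hmem
      rcases mem_union.1 hxI with hxA | hxB
      · exact .inl ⟨x, hxA, starFam_one hxA ▸ hmem⟩
      · exact .inr (.inl ⟨x, hxB, starFam_one hxB ▸ hmem⟩)
    · exact .inr (.inr ⟨rfl, insert x D, hT, disjoint_insert_left.2 ⟨hxI, hDI⟩, hDT⟩)
  · rw [show k - #D = m by omega] at hD
    exact hD.imp (fun ⟨v, hv, h⟩ ↦ ⟨v, hv, h.ge⟩) fun ⟨v, hv, h⟩ ↦ .inl ⟨v, hv, h.ge⟩

lemma PerfectSet.card_FamC {U : Finset (Fin n)} (hC : PerfectSet k F A B U C)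
    (hA : #A = k) (hB : #B = k) (hm : 1 ≤ m) (hCm : #C + (m + 1) = k) :
    #(FamC F U C) = (k - 1).choose m := by
  rw [PerfectSet, if_neg (by omega), show k - #C = m + 1 by omega] at hC
  rcases hC with ⟨v, hv, h⟩ | ⟨v, hv, h⟩
  · rw [h, card_starFam (by omega) hv, hA, Nat.add_sub_cancel]
  · rw [h, card_starFam (by omega) hv, hB, Nat.add_sub_cancel]

lemma card_FamC_lt_of_ssubset_perfectSet (hci : CondIntersecting 3 (2 * k) F)
    (hunif : ∀ S ∈ F, #S = k) (hA : A ∈ F) (hB : B ∈ F) (hAB : Disjoint A B)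
    (hm : 1 ≤ m) (hmk : 2 * m + 1 ≤ k) (hCD : C ⊂ D) (hCm : #C + (m + 1) = k) (hDm : #D + m = k)
    (hDI : Disjoint D (A ∪ B)) (hD : PerfectSet k F A B (univ \ (A ∪ B)) D)
    (hC : ¬ PerfectSet k F A B (univ \ (A ∪ B)) C) :
    #(FamC F (univ \ (A ∪ B)) C) < (k - 1).choose m := by
  rw [PerfectSet, if_neg (by omega), show k - #C = m + 1 by omega] at hC
  push Not at hC
  obtain ⟨hCA, hCB⟩ := hC
  rcases hD.starFam_subset_FamC_or hunif hm hDm hDI with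
    ⟨v, hv, hstar⟩ | ⟨v, hv, hstar⟩ | ⟨rfl, T, hT, hTI, hDT⟩
  · have hsub := hci.FamC_subset_starFam hunif hA hB hAB hv hm hmk hCD hCm hDm hstar
    simpa only [card_starFam (Nat.le_add_left 1 m) hv, hunif A hA, Nat.add_sub_cancel] using
      card_lt_card (hsub.ssubset_of_ne (hCA v hv))
  · rw [union_comm] at hstar hCB ⊢
    have hsub := hci.FamC_subset_starFam hunif hB hA hAB.symm hv hm hmk hCD hCm hDm hstar
    simpa only [card_starFam (Nat.le_add_left 1 m) hv, hunif B hB, Nat.add_sub_cancel] using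
      card_lt_card (hsub.ssubset_of_ne (hCB v hv))
  · have hle := hci.card_FamC_le_one_of_disjoint hunif hA hB hAB hT hTI (hCD.subset.trans hDT)
      hCm hmk
    rw [Nat.choose_one_right]
    omega

end Perfect

section Counting

variable {n k m : ℕ} {F : Finset (Finset (Fin n))} {A B : Finset (Fin n)}

lemma card_univ_sdiff_union (hA : #A = k) (hB : #B = k) (hAB : Disjoint A B) :
    #(univ \ (A ∪ B)) = n - 2 * k := by
  rw [card_univ_sdiff, card_union_of_disjoint hAB, hA, hB, Fintype.card_fin, two_mul]

lemma card_level_zero_add_card_level_one_add_nonPerfectCount_le (hk : 2 ≤ k)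
    (hci : CondIntersecting 3 (2 * k) F) (hunif : ∀ S ∈ F, #S = k)
    (huniq : ∀ S ∈ F, ∃ G ⊆ S, #G = k - 1 ∧ ∀ T ∈ F, G ⊆ T → T = S)
    (hA : A ∈ F) (hB : B ∈ F) (hAB : Disjoint A B) :
    #(level F (A ∪ B) 0) + #(level F (A ∪ B) 1)
      + nonPerfectCount k 1 F A B (univ \ (A ∪ B)) ≤ (n - 2 * k).choose (k - 1) := by
  classical
  set U := univ \ (A ∪ B)
  have hown : ∀ S ∈ level F (A ∪ B) 0 ∪ level F (A ∪ B) 1,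
      S ∈ F ∧ ∃ G ∈ U.powersetCard (k - 1), G ⊆ S ∧ ∀ T ∈ F, G ⊆ T → T = S := by
    intro S hS
    simp only [mem_union, mem_level, ← and_or_left] at hS
    exact ⟨hS.1, hci.exists_own_subset_of_card_inter_le_one hk hunif huniq hA hB hAB hS.1
      (by omega)⟩
  choose! hF G hGU hGS hG using hown
  have hperfect : #(level F (A ∪ B) 0 ∪ level F (A ∪ B) 1) ≤
      #{C ∈ U.powersetCard (k - 1) | PerfectSet k F A B U C} := by
    refine card_le_card_of_injOn G (fun S hS ↦ ?_) fun S hS T hT hST ↦ ?_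
    · refine mem_coe.2 (mem_filter.2 ⟨hGU S hS, ?_⟩)
      rw [PerfectSet, if_pos (mem_powersetCard.1 (hGU S hS)).2]
      exact ⟨S, hF S hS, hGS S hS⟩
    · exact hG T hT S (hF S hS) (hST ▸ hGS S hS)
  have hdisj : Disjoint (level F (A ∪ B) 0) (level F (A ∪ B) 1) := by
    rw [disjoint_left]
    simp only [mem_level]
    omega
  rw [card_union_of_disjoint hdisj] at hperfect
  grw [hperfect, nonPerfectCount, card_filter_add_card_filter_not, card_powersetCard,
    card_univ_sdiff_union (hunif A hA) (hunif B hB) hAB]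

lemma card_level_add_nonPerfectCount_le (hci : CondIntersecting 3 (2 * k) F)
    (hunif : ∀ S ∈ F, #S = k) (hA : A ∈ F) (hB : B ∈ F) (hAB : Disjoint A B)
    (hm : 1 ≤ m) (hmk : 2 * m + 1 ≤ k) :
    #(level F (A ∪ B) (m + 1)) + nonPerfectCount k (m + 1) F A B (univ \ (A ∪ B)) ≤
      (k - 1).choose m * (n - 2 * k).choose (k - (m + 1)) +
        (2 * k).choose (m + 1) * badCount k (m + 1) F A B (univ \ (A ∪ B)) := by
  rw [card_level_eq_sum_card_FamC hunif (by omega), nonPerfectCount, badCount,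
    card_filter, card_filter, mul_sum, ← card_univ_sdiff_union (hunif A hA) (hunif B hB) hAB,
    ← card_powersetCard, mul_comm ((k - 1).choose m), ← sum_const_nat (fun _ _ ↦ rfl),
    ← sum_add_distrib, ← sum_add_distrib]
  refine sum_le_sum fun C hC ↦ ?_
  obtain ⟨-, hCm⟩ := mem_powersetCard.1 hC
  replace hCm : #C + (m + 1) = k := by omega
  by_cases hperf : PerfectSet k F A B (univ \ (A ∪ B)) C
  · simp [hperf, hperf.card_FamC (hunif A hA) (hunif B hB) hm hCm]
  rw [if_pos hperf]
  split_ifs with hbad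
  · have hcrude : #(FamC F (univ \ (A ∪ B)) C) ≤ (2 * k).choose (m + 1) := by
      refine (card_le_card (FamC_subset_powersetCard (i := m + 1) fun S hS ↦ ?_)).trans_eq ?_
      · rw [hunif S hS, hCm]
      · rw [card_powersetCard, card_union_of_disjoint hAB, hunif A hA, hunif B hB, two_mul]
    have hpos : 0 < (k - 1).choose m := Nat.choose_pos (by omega)
    omega
  · simp only [not_and, hperf, not_false_eq_true, true_imp_iff, not_forall, not_not] at hbad
    obtain ⟨D, hD, hCD, hDperf⟩ := hbad
    obtain ⟨hDU, hDm⟩ := mem_powersetCard.1 hD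
    replace hDm : #D + m = k := by omega
    have hssub : C ⊂ D := hCD.ssubset_of_ne (by rintro rfl; omega)
    have hlt := card_FamC_lt_of_ssubset_perfectSet hci hunif hA hB hAB hm hmk hssub hCm hDm
      (subset_sdiff.1 hDU).2 hDperf hperf
    omega

lemma badCount_mul_le_nonPerfectCount_mul {U : Finset (Fin n)} (hmk : m + 1 ≤ k) :
    badCount k (m + 1) F A B U * (#U - (k - (m + 1))) ≤ nonPerfectCount k m F A B U * (k - m) := by
  classical
  have hkm : k - (m + 1) + 1 = k - m := by omega
  unfold badCount nonPerfectCount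
  rw [← hkm]
  refine card_mul_le_card_mul_of_insert_mem (filter_subset _ _)
    (fun D hD ↦ (mem_powersetCard.1 (mem_filter.1 hD).1).2) fun C hC x hx ↦ ?_
  obtain ⟨hC, -, hbad⟩ := mem_filter.1 hC
  obtain ⟨hCU, hCcard⟩ := mem_powersetCard.1 hC
  obtain ⟨hxU, hxC⟩ := mem_sdiff.1 hx
  have hins : insert x C ∈ U.powersetCard (k - (m + 1) + 1) :=
    mem_powersetCard.2 ⟨insert_subset hxU hCU, by rw [card_insert_of_notMem hxC, hCcard]⟩
  exact mem_filter.2 ⟨hins, hbad _ hins (subset_insert x C)⟩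

lemma two_mul_choose_mul_le_of_le {i : ℕ} (hk : 2 ≤ k) (hn : 3 * k * (2 * k).choose k ≤ n) :
    2 * (2 * k).choose i * k ≤ n - 3 * k := by
  have hchoose (j : ℕ) : (2 * k).choose j ≤ (2 * k).choose k := by
    simpa only [Nat.centralBinom] using Nat.choose_le_centralBinom j k
  have hthree : 3 ≤ (2 * k).choose k := by
    have hone := hchoose 1
    rw [Nat.choose_one_right] at hone
    omega
  refine Nat.le_sub_of_add_le (le_trans ?_ hn)
  calc 2 * (2 * k).choose i * k + 3 * k
      ≤ 2 * (2 * k).choose k * k + (2 * k).choose k * k := by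
        gcongr
        exact hchoose i
    _ = 3 * k * (2 * k).choose k := by ring

lemma two_mul_choose_mul_badCount_le (hk : 2 ≤ k) (hn : 3 * k * (2 * k).choose k ≤ n)
    (hA : #A = k) (hB : #B = k) (hAB : Disjoint A B) (hmk : m + 1 ≤ k) :
    2 * (2 * k).choose (m + 1) * badCount k (m + 1) F A B (univ \ (A ∪ B)) ≤
      nonPerfectCount k m F A B (univ \ (A ∪ B)) := by
  set b := badCount k (m + 1) F A B (univ \ (A ∪ B))
  have hU : 2 * (2 * k).choose (m + 1) * k ≤ #(univ \ (A ∪ B)) - (k - (m + 1)) := by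
    rw [card_univ_sdiff_union hA hB hAB]
    exact (two_mul_choose_mul_le_of_le hk hn).trans (by omega)
  refine Nat.le_of_mul_le_mul_right (c := k) ?_ (by omega)
  calc 2 * (2 * k).choose (m + 1) * b * k = b * (2 * (2 * k).choose (m + 1) * k) := by ring
    _ ≤ b * (#(univ \ (A ∪ B)) - (k - (m + 1))) := by gcongr
    _ ≤ nonPerfectCount k m F A B (univ \ (A ∪ B)) * (k - m) :=
      badCount_mul_le_nonPerfectCount_mul hmk
    _ ≤ nonPerfectCount k m F A B (univ \ (A ∪ B)) * k := by
      gcongr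
      exact Nat.sub_le k m

lemma two_mul_card_level_add_two_mul_nonPerfectCount_le (hn : 3 * k * (2 * k).choose k ≤ n)
    (hci : CondIntersecting 3 (2 * k) F) (hunif : ∀ S ∈ F, #S = k)
    (hA : A ∈ F) (hB : B ∈ F) (hAB : Disjoint A B) (hm : 1 ≤ m) (hmk : 2 * m + 1 ≤ k) :
    2 * #(level F (A ∪ B) (m + 1)) + 2 * nonPerfectCount k (m + 1) F A B (univ \ (A ∪ B)) ≤
      2 * ((k - 1).choose m * (n - 2 * k).choose (k - (m + 1))) +
        nonPerfectCount k m F A B (univ \ (A ∪ B)) := by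
  have hlevel := card_level_add_nonPerfectCount_le hci hunif hA hB hAB hm hmk
  have hbad := two_mul_choose_mul_badCount_le (F := F) (m := m) (by omega) hn (hunif A hA)
    (hunif B hB) hAB (by omega)
  rw [mul_assoc] at hbad
  omega

end Counting

theorem stmt16_general {n k : ℕ} (hk : 2 ≤ k) (hn : 3 * k * (2 * k).choose k ≤ n)
    {F : Finset (Finset (Fin n))} (hunif : ∀ S ∈ F, #S = k)
    (hci : CondIntersecting 3 (2 * k) F)
    (huniq : ∀ S ∈ F, ∃ G ⊆ S, #G = k - 1 ∧ ∀ T ∈ F, G ⊆ T → T = S)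
    {A B : Finset (Fin n)} (hA : A ∈ F) (hB : B ∈ F) (hAB : Disjoint A B)
    {ℓ : ℕ} (hℓ : 1 ≤ ℓ) (hℓk : 2 * ℓ ≤ k + 1) :
    (2 * ∑ i ∈ range (ℓ + 1), #(level F (A ∪ B) i) : ℤ) ≤
      ∑ i ∈ Icc 1 ℓ, ((2 * ((k - 1).choose (i - 1) * (n - 2 * k).choose (k - i)) : ℕ)
        - (nonPerfectCount k i F A B (univ \ (A ∪ B)) : ℤ))
      - nonPerfectCount k ℓ F A B (univ \ (A ∪ B)) := by
  induction ℓ, hℓ using Nat.le_induction with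
  | base =>
    have hbase := card_level_zero_add_card_level_one_add_nonPerfectCount_le
      hk hci hunif huniq hA hB hAB
    simp only [sum_range_succ, sum_range_zero, Icc_self, sum_singleton, Nat.sub_self,
      Nat.choose_zero_right, one_mul]
    omega
  | succ m hm ih =>
    have hstep := two_mul_card_level_add_two_mul_nonPerfectCount_le hn hci hunif hA hB hAB hm
      (by omega)
    have hprev := ih (by omega)
    rw [sum_range_succ, sum_Icc_succ_top (by omega), Nat.add_sub_cancel]
    zify at hstep
    push_cast at hprev ⊢
    linarith

theorem stmt16 (n k : ℕ) (hk : 3 ≤ k) (hn : 3 * k * (2 * k).choose k ≤ n)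
    (F : Finset (Finset (Fin n))) (hunif : ∀ S ∈ F, S.card = k)
    (hci : CondIntersecting 3 (2 * k) F)
    (huniq : ∀ S ∈ F, ∃ G ⊆ S, G.card = k - 1 ∧ ∀ T ∈ F, G ⊆ T → T = S)
    (A B : Finset (Fin n)) (hA : A ∈ F) (hB : B ∈ F) (hAB : Disjoint A B) :
    ∀ ℓ : ℕ, 1 ≤ ℓ → 2 * ℓ ≤ k + 1 →
      (2 * ∑ i ∈ Finset.range (ℓ + 1),
          (F.filter (fun S => (S ∩ (A ∪ B)).card = i)).card : ℤ) ≤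
        ∑ i ∈ Finset.Icc 1 ℓ,
          ((2 * ((k - 1).choose (i - 1) * (n - 2 * k).choose (k - i)) : ℕ)
            - (nonPerfectCount k i F A B (Finset.univ \ (A ∪ B)) : ℤ)) :=
  fun ℓ hℓ hℓk ↦ (stmt16_general (by omega) hn hunif hci huniq hA hB hAB hℓ hℓk).trans
    (sub_le_self _ (Nat.cast_nonneg _))
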